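/- Let 0 ≤ r1, r2 ≤ n and 0 ≤ s ≤ min(r1, n − r1, r2, n − r2), and write h(t) = λ_s^{r1,r2}(t; n). Then for all t ∈ ℂ: t(r1 − r2 + t)·(h(t+1) − 2h(t) + h(t−1)) + (r2(n − r1) − n·t)·(h(t+1) − h(t)) + s(n − s + 1)·h(t) = 0. That is, the Hahn kernel satisfies the difference equation of hypergeometric type σ(t)Δ∇h + τ(t)Δh + μ h = 0 with σ(t) = t(r1 − r2 + t), τ(t) = r2(n − r1) − nt and μ = s(n − s + 1). -/

import Mathlib

/-- Falling factorial `z(z-1)⋯(z-k+1)` for complex `z`. -/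
noncomputable def cfall (z : ℂ) (k : ℕ) : ℂ := ∏ i ∈ Finset.range k, (z - i)

/-- Generalized binomial coefficient `binom(t, j)` for complex `t`. -/
noncomputable def cbinom (t : ℂ) (j : ℕ) : ℂ := cfall t j / (Nat.factorial j)

/-- The Hahn kernel `λ_s^{r1,r2}(t; n)`. -/
noncomputable def hahn (n r1 r2 s : ℕ) (t : ℂ) : ℂ :=
  ∑ j ∈ Finset.range (s + 1),
    (-1 : ℂ) ^ j * cbinom t j * cfall (s : ℂ) j * cfall ((n : ℂ) - s + 1) j /
      (cfall ((n : ℂ) - r1) j * cfall (r2 : ℂ) j)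

/-! In the Newton basis `binom(t, j)` the operator `L = σ Δ∇ + τ Δ` is bidiagonal: it maps
`binom(·, j + 1)` to `-(j + 1)(n - j) binom(·, j + 1) + (n - r1 - j)(r2 - j) binom(·, j)`. Adding
`μ = s(n - s + 1)` turns the diagonal entry into `(s - (j + 1))(n - s + 1 - (j + 1))`, so that the
ratio of consecutive coefficients of the kernel makes the series for `(L + μ) h` telescope. What is
left after the term of index `m` carries the factor `s - m`, which vanishes where the kernel stops,
at `m = s`. -/

section CommRing

variable {R : Type*} [CommRing R]

/-- The hypergeometric difference operator `σ Δ∇ + τ Δ` with `σ(t) = t(r1 - r2 + t)` and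
`τ(t) = r2(n - r1) - nt`, whose eigenfunctions are the Hahn kernels. It is written out in the values
of `h` at `t - 1`, `t`, `t + 1`. -/
def hahnOperator (n r1 r2 : R) : (R → R) →ₗ[R] (R → R) where
  toFun h t := t * (r1 - r2 + t) * (h (t + 1) - 2 * h t + h (t - 1)) +
    (r2 * (n - r1) - n * t) * (h (t + 1) - h t)
  map_add' g h := by
    ext t
    simp only [Pi.add_apply]
    ring
  map_smul' c h := by
    ext t
    simp only [Pi.smul_apply, smul_eq_mul, RingHom.id_apply]
    ring

lemma hahnOperator_apply (n r1 r2 : R) (h : R → R) (t : R) :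
    hahnOperator n r1 r2 h t = t * (r1 - r2 + t) * (h (t + 1) - 2 * h t + h (t - 1)) +
      (r2 * (n - r1) - n * t) * (h (t + 1) - h t) :=
  rfl

variable [BinomialRing R]

lemma succ_mul_ringChoose_succ (t : R) (j : ℕ) :
    ((j : R) + 1) * Ring.choose t (j + 1) = (t - j) * Ring.choose t j := by
  simpa [Ring.choose_one_right, nsmul_eq_mul, mul_comm] using
    Ring.choose_smul_choose t j.le_succ

lemma mul_ringChoose_sub_one (t : R) (j : ℕ) :
    t * Ring.choose (t - 1) j = (t - j) * Ring.choose t j := by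
  rw [← succ_mul_ringChoose_succ]
  simpa [Ring.choose_one_right, nsmul_eq_mul] using
    (Ring.choose_smul_choose t (Nat.le_add_left 1 j)).symm

lemma mul_ringChoose_second_difference (t : R) (j : ℕ) :
    t * (Ring.choose (t + 1) (j + 1) - 2 * Ring.choose t (j + 1) + Ring.choose (t - 1) (j + 1)) =
      j * Ring.choose t j := by
  have pascal := Ring.choose_succ_succ t j
  have pascal_sub_one := Ring.choose_succ_succ (t - 1) j
  rw [sub_add_cancel] at pascal_sub_one
  linear_combination t * pascal - t * pascal_sub_one - mul_ringChoose_sub_one t j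

lemma hahnOperator_ringChoose_zero (n r1 r2 : R) :
    hahnOperator n r1 r2 (Ring.choose · 0) = 0 := by
  ext t
  simp only [hahnOperator_apply, Ring.choose_zero_right, Pi.zero_apply]
  ring

lemma hahnOperator_ringChoose_succ (n r1 r2 t : R) (j : ℕ) :
    hahnOperator n r1 r2 (Ring.choose · (j + 1)) t =
      (n - r1 - j) * (r2 - j) * Ring.choose t j -
        (j + 1) * (n - j) * Ring.choose t (j + 1) := by
  rw [hahnOperator_apply]
  linear_combination (r1 - r2 + t) * mul_ringChoose_second_difference t j +
    (r2 * (n - r1) - n * t) * Ring.choose_succ_succ t j + (n - j) * succ_mul_ringChoose_succ t j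

end CommRing

section Field

open Finset

variable {K : Type*} [Field K]

/-- The coefficient of `binom(t, j)` in the Hahn kernel. -/
noncomputable def hahnCoeff (n r1 r2 s : K) (j : ℕ) : K :=
  (-1) ^ j * (descPochhammer K j).eval s * (descPochhammer K j).eval (n - s + 1) /
    ((descPochhammer K j).eval (n - r1) * (descPochhammer K j).eval r2)

lemma hahnCoeff_succ_mul (n s : K) {r1 r2 : K} {j : ℕ} (h1 : n - r1 ≠ j) (h2 : r2 ≠ j) :
    hahnCoeff n r1 r2 s (j + 1) * ((n - r1 - j) * (r2 - j)) =
      -(hahnCoeff n r1 r2 s j * ((s - j) * (n - s + 1 - j))) := by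
  have h1' : n - r1 - j ≠ 0 := sub_ne_zero.2 h1
  have h2' : r2 - j ≠ 0 := sub_ne_zero.2 h2
  simp only [hahnCoeff, descPochhammer_succ_eval]
  field_simp
  ring

variable [CharZero K]

lemma hahnOperator_sum_range_add (n s t : K) {r1 r2 : K} {m : ℕ} (h1 : ∀ j < m, n - r1 ≠ j)
    (h2 : ∀ j < m, r2 ≠ j) :
    hahnOperator n r1 r2
        (∑ j ∈ range (m + 1), hahnCoeff n r1 r2 s j • (Ring.choose · j)) t +
      s * (n - s + 1) * (∑ j ∈ range (m + 1), hahnCoeff n r1 r2 s j • (Ring.choose · j)) t =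
    hahnCoeff n r1 r2 s m * ((s - m) * (n - s + 1 - m)) * Ring.choose t m := by
  induction m with
  | zero =>
    rw [zero_add, sum_range_one, map_smul, hahnOperator_ringChoose_zero]
    simp only [Pi.smul_apply, Pi.zero_apply, smul_eq_mul]
    push_cast
    ring
  | succ m ih =>
    have partial_sum := ih (fun j hj ↦ h1 j (hj.trans m.lt_succ_self))
      fun j hj ↦ h2 j (hj.trans m.lt_succ_self)
    have coeff_succ := hahnCoeff_succ_mul n s (h1 m m.lt_succ_self) (h2 m m.lt_succ_self)
    rw [sum_range_succ, map_add, map_smul]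
    simp only [Pi.add_apply, Pi.smul_apply, smul_eq_mul, hahnOperator_ringChoose_succ]
    push_cast
    linear_combination partial_sum + Ring.choose t m * coeff_succ

/-- The Hahn kernel `λ_s^{r1,r2}(·; n)` with parameters `n`, `r1`, `r2` in a field of characteristic
zero. The degree `s` stays a natural number, which makes the series terminate. -/
noncomputable def hahnKernel (n r1 r2 : K) (s : ℕ) : K → K :=
  ∑ j ∈ range (s + 1), hahnCoeff n r1 r2 s j • (Ring.choose · j)

theorem stmt_13_general {n r1 r2 : K} {s : ℕ} (h1 : ∀ j < s, n - r1 ≠ j) (h2 : ∀ j < s, r2 ≠ j)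
    (t : K) :
    t * (r1 - r2 + t) *
        (hahnKernel n r1 r2 s (t + 1) - 2 * hahnKernel n r1 r2 s t + hahnKernel n r1 r2 s (t - 1)) +
      (r2 * (n - r1) - n * t) * (hahnKernel n r1 r2 s (t + 1) - hahnKernel n r1 r2 s t) +
      s * (n - s + 1) * hahnKernel n r1 r2 s t = 0 := by
  rw [← hahnOperator_apply, hahnKernel, hahnOperator_sum_range_add n s t h1 h2]
  ring

end Field

lemma cfall_eq_descPochhammer_eval (z : ℂ) (k : ℕ) : cfall z k = (descPochhammer ℂ k).eval z :=
  (descPochhammer_eval_eq_prod_range k z).symm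

lemma cbinom_eq_ringChoose (t : ℂ) (j : ℕ) : cbinom t j = Ring.choose t j := by
  rw [cbinom, cfall_eq_descPochhammer_eval, Ring.choose_eq_smul, smul_eq_mul, div_eq_inv_mul,
    ← descPochhammer_map (algebraMap ℤ ℂ), Polynomial.eval_map, ← Polynomial.aeval_def,
    Polynomial.aeval_eq_smeval]

lemma hahn_eq_hahnKernel (n r1 r2 s : ℕ) : hahn n r1 r2 s = hahnKernel (n : ℂ) r1 r2 s := by
  ext t
  simp only [hahn, hahnKernel, hahnCoeff, cfall_eq_descPochhammer_eval, cbinom_eq_ringChoose,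
    Finset.sum_apply, Pi.smul_apply, smul_eq_mul]
  exact Finset.sum_congr rfl fun j _ ↦ by ring

/-- The Hahn kernel `h = λ_s^{r1,r2}(·; n)` satisfies the hypergeometric difference equation
`σ(t)Δ∇h(t) + τ(t)Δh(t) + s(n-s+1)h(t) = 0` with `σ(t) = t(r1-r2+t)` and
`τ(t) = r2(n-r1) - nt`, for all `t ∈ ℂ`. -/
theorem stmt_13 (n r1 r2 s : ℕ) (h1 : r1 ≤ n) (h2 : r2 ≤ n)
    (hs : s ≤ min (min r1 (n - r1)) (min r2 (n - r2))) (t : ℂ) :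
    t * ((r1 : ℂ) - r2 + t) *
        (hahn n r1 r2 s (t + 1) - 2 * hahn n r1 r2 s t + hahn n r1 r2 s (t - 1)) +
      ((r2 : ℂ) * ((n : ℂ) - r1) - (n : ℂ) * t) *
        (hahn n r1 r2 s (t + 1) - hahn n r1 r2 s t) +
      (s : ℂ) * ((n : ℂ) - s + 1) * hahn n r1 r2 s t = 0 := by
  have sub_ne : ∀ j < s, (n : ℂ) - r1 ≠ j := fun j hj ↦ by
    rw [← Nat.cast_sub h1]
    exact_mod_cast (by omega : n - r1 ≠ j)
  have r2_ne : ∀ j < s, (r2 : ℂ) ≠ j := fun j hj ↦ by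
    exact_mod_cast (by omega : r2 ≠ j)
  simpa only [hahn_eq_hahnKernel] using stmt_13_general sub_ne r2_ne t
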